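/- Let p > 2 and suppose {(g_j, g_j*)} is an unconditional Schauder frame for L^p[0,1] such that ‖g_j‖_p = 1 for all j and |g_j(x)| ≤ M a.e. for some constant M. Then inf_j ‖g_j*‖ = 0; in particular the functionals {g_j*} are not seminormalized. -/

import Mathlib

open MeasureTheory

/-- The complex value of a sign. -/
def sgC (u : ℤˣ) : ℂ := ((u : ℤ) : ℂ)

lemma sgC_norm (u : ℤˣ) : ‖sgC u‖ = 1 := by
  rcases Int.units_eq_one_or u with h | h <;> simp [sgC, h]

lemma sgC_sq (u : ℤˣ) : sgC u * sgC u = 1 := by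
  rcases Int.units_eq_one_or u with h | h <;> simp [sgC, h]

lemma sgC_conj (u : ℤˣ) : (starRingEnd ℂ) (sgC u) = sgC u := by
  simp [sgC]

lemma sgC_orth {ι : Type*} [Fintype ι] [DecidableEq ι] (i j : ι) :
    ∑ ε : ι → ℤˣ, sgC (ε i) * sgC (ε j) = if i = j then (Fintype.card (ι → ℤˣ) : ℂ) else 0 := by
  split_ifs with h
  · subst h
    simp [sgC_sq]
  · have h1 : ∑ ε : ι → ℤˣ, sgC (ε i) * sgC (ε j)
        = ∑ ε : ι → ℤˣ,
          sgC (((Pi.mulSingle i (-1) : ι → ℤˣ) * ε) i) * sgC (((Pi.mulSingle i (-1) : ι → ℤˣ) * ε) j) :=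
      (Equiv.sum_comp (Equiv.mulLeft (Pi.mulSingle i (-1) : ι → ℤˣ))
        (fun ε => sgC (ε i) * sgC (ε j))).symm
    have h2 : ∀ ε : ι → ℤˣ, sgC (((Pi.mulSingle i (-1) : ι → ℤˣ) * ε) i) * sgC (((Pi.mulSingle i (-1) : ι → ℤˣ) * ε) j)
        = - (sgC (ε i) * sgC (ε j)) := by
      intro ε
      have : (Pi.mulSingle i (-1) : ι → ℤˣ) j = 1 := Pi.mulSingle_eq_of_ne (Ne.symm h) _
      simp [this, sgC]
    simp_rw [h2, Finset.sum_neg_distrib] at h1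
    exact self_eq_neg.mp h1

lemma avg_diag {ι : Type*} [Fintype ι] [DecidableEq ι] {E : Type*} [AddCommGroup E] [Module ℂ E]
    (T : ι → ι → E) :
    ∑ ε : ι → ℤˣ, ∑ j, ∑ k, (sgC (ε j) * sgC (ε k)) • T j k
      = (Fintype.card (ι → ℤˣ) : ℂ) • ∑ j, T j j := by
  rw [Finset.sum_comm, Finset.smul_sum]
  refine Finset.sum_congr rfl fun j _ => ?_
  rw [Finset.sum_comm]
  simp_rw [← Finset.sum_smul, sgC_orth, ite_smul, zero_smul]
  simp

lemma avg_sq {ι : Type*} [Fintype ι] [DecidableEq ι] (z : ι → ℂ) :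
    ∑ ε : ι → ℤˣ, ‖∑ j, sgC (ε j) * z j‖ ^ 2
      = (Fintype.card (ι → ℤˣ) : ℝ) * ∑ j, ‖z j‖ ^ 2 := by
  have h := avg_diag (fun j k => z j * (starRingEnd ℂ) (z k))
  have e : ∀ w : ℂ, ((‖w‖ ^ 2 : ℝ) : ℂ) = w * (starRingEnd ℂ) w := by
    intro w; rw [Complex.mul_conj, Complex.normSq_eq_norm_sq]
  have : ((∑ ε : ι → ℤˣ, ‖∑ j, sgC (ε j) * z j‖ ^ 2 : ℝ) : ℂ)
      = (((Fintype.card (ι → ℤˣ) : ℝ) * ∑ j, ‖z j‖ ^ 2 : ℝ) : ℂ) := by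
    rw [Complex.ofReal_sum, Complex.ofReal_mul, Complex.ofReal_sum]
    simp_rw [e]
    rw [smul_eq_mul] at h
    rw [Complex.ofReal_natCast, ← h]
    refine Finset.sum_congr rfl fun ε _ => ?_
    rw [map_sum, Finset.sum_mul_sum]
    refine Finset.sum_congr rfl fun j _ => Finset.sum_congr rfl fun k _ => ?_
    rw [map_mul, sgC_conj, smul_eq_mul]; ring
  exact_mod_cast this

lemma avg_exp {ι : Type*} [Fintype ι] [DecidableEq ι] (a : ι → ℝ) :
    ∑ ε : ι → ℤˣ, Real.exp (∑ j, ((ε j : ℤ) : ℝ) * a j)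
      ≤ (Fintype.card (ι → ℤˣ) : ℝ) * Real.exp ((∑ j, a j ^ 2) / 2) := by
  simp_rw [Real.exp_sum]
  have := Finset.prod_univ_sum (fun _ : ι => (Finset.univ : Finset ℤˣ))
    (fun j (u : ℤˣ) => Real.exp (((u : ℤ) : ℝ) * a j))
  rw [Fintype.piFinset_univ] at this
  rw [← this]
  have h2 : ∀ j, ∑ u : ℤˣ, Real.exp (((u : ℤ) : ℝ) * a j) = 2 * Real.cosh (a j) := by
    intro j
    rw [UnitsInt.univ, Finset.sum_pair (by decide), Real.cosh_eq]
    simp; ring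
  simp_rw [h2]
  rw [Finset.prod_mul_distrib]
  have hc : (Fintype.card (ι → ℤˣ) : ℝ) = ∏ _j : ι, (2:ℝ) := by
    simp [Fintype.card_units_int]
  rw [hc, Finset.sum_div, Real.exp_sum]
  gcongr with j
  exact Real.cosh_le_exp_half_sq _

lemma exp_abs_le (x : ℝ) : Real.exp |x| ≤ Real.exp x + Real.exp (-x) := by
  rcases abs_cases x with h | h <;> rw [h.1] <;> linarith [Real.exp_pos x, Real.exp_pos (-x)]

lemma avg_exp_norm {ι : Type*} [Fintype ι] [DecidableEq ι] (z : ι → ℂ) :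
    ∑ ε : ι → ℤˣ, Real.exp ‖∑ j, sgC (ε j) * z j‖
      ≤ (Fintype.card (ι → ℤˣ) : ℝ) * (4 * Real.exp (∑ j, ‖z j‖ ^ 2)) := by
  have key : ∀ s t : ℝ, s ^ 2 = 1 → t ^ 2 = 1 →
      ∑ ε : ι → ℤˣ, Real.exp (∑ j, ((ε j : ℤ) : ℝ) * (s * (z j).re + t * (z j).im))
      ≤ (Fintype.card (ι → ℤˣ) : ℝ) * Real.exp (∑ j, ‖z j‖ ^ 2) := by
    intro s t hs ht
    refine (avg_exp _).trans ?_
    gcongr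
    rw [Finset.sum_div]
    gcongr with j
    have : ‖z j‖ ^ 2 = (z j).re ^ 2 + (z j).im ^ 2 := by
      rw [← Complex.normSq_eq_norm_sq, Complex.normSq_apply]; ring
    rw [this]
    have e1 : (s * (z j).re) ^ 2 = (z j).re ^ 2 := by rw [mul_pow, hs, one_mul]
    have e2 : (t * (z j).im) ^ 2 = (z j).im ^ 2 := by rw [mul_pow, ht, one_mul]
    nlinarith [sq_nonneg (s * (z j).re - t * (z j).im)]
  have pt : ∀ ε : ι → ℤˣ, Real.exp ‖∑ j, sgC (ε j) * z j‖ ≤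
      Real.exp (∑ j, ((ε j : ℤ) : ℝ) * (1 * (z j).re + 1 * (z j).im))
      + Real.exp (∑ j, ((ε j : ℤ) : ℝ) * (1 * (z j).re + (-1) * (z j).im))
      + Real.exp (∑ j, ((ε j : ℤ) : ℝ) * ((-1) * (z j).re + 1 * (z j).im))
      + Real.exp (∑ j, ((ε j : ℤ) : ℝ) * ((-1) * (z j).re + (-1) * (z j).im)) := by
    intro ε
    set w := ∑ j, sgC (ε j) * z j with hw
    have hre : w.re = ∑ j, ((ε j : ℤ) : ℝ) * (z j).re := by
      simp [hw, sgC]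
    have him : w.im = ∑ j, ((ε j : ℤ) : ℝ) * (z j).im := by
      simp [hw, sgC]
    have hs : ∀ s t : ℝ, ∑ j, ((ε j : ℤ) : ℝ) * (s * (z j).re + t * (z j).im)
        = s * w.re + t * w.im := by
      intro s t
      rw [hre, him, Finset.mul_sum, Finset.mul_sum, ← Finset.sum_add_distrib]
      exact Finset.sum_congr rfl fun j _ => by ring
    simp_rw [hs]
    have h1 : Real.exp ‖w‖ ≤ Real.exp |w.re| * Real.exp |w.im| := by
      rw [← Real.exp_add]
      exact Real.exp_le_exp.mpr (Complex.norm_le_abs_re_add_abs_im w)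
    have h2 : Real.exp |w.re| * Real.exp |w.im| ≤
        (Real.exp w.re + Real.exp (-w.re)) * (Real.exp w.im + Real.exp (-w.im)) :=
      mul_le_mul (exp_abs_le _) (exp_abs_le _) (Real.exp_pos _).le (by positivity)
    refine h1.trans (h2.trans (le_of_eq ?_))
    simp only [Real.exp_add, one_mul, neg_one_mul]
    ring
  refine (Finset.sum_le_sum fun ε _ => pt ε).trans ?_
  simp only [Finset.sum_add_distrib]
  have k1 := key 1 1 (by norm_num) (by norm_num)
  have k2 := key 1 (-1) (by norm_num) (by norm_num)
  have k3 := key (-1) 1 (by norm_num) (by norm_num)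
  have k4 := key (-1) (-1) (by norm_num) (by norm_num)
  linarith

/-- Upper Khintchine inequality. -/
lemma khintchine (p : ℝ) (hp : 2 < p) : ∃ C : ℝ, 0 < C ∧
    ∀ {ι : Type} [Fintype ι] [DecidableEq ι] (z : ι → ℂ),
    ∑ ε : ι → ℤˣ, ‖∑ j, sgC (ε j) * z j‖ ^ p
      ≤ (Fintype.card (ι → ℤˣ) : ℝ) * (C * (∑ j, ‖z j‖ ^ 2) ^ (p / 2)) := by
  obtain ⟨m, hm⟩ := exists_nat_ge p
  set D : ℝ := 1 + (m.factorial : ℝ) with hD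
  have hDpos : 0 < D := by positivity
  have hpow : ∀ t : ℝ, 0 ≤ t → t ^ p ≤ D * Real.exp t := by
    intro t ht
    have he : 1 ≤ Real.exp t := Real.one_le_exp ht
    have hf : t ^ m ≤ (m.factorial : ℝ) * Real.exp t := by
      have := Real.pow_div_factorial_le_exp t ht m
      rw [div_le_iff₀ (by positivity)] at this
      linarith
    rcases le_total t 1 with h | h
    · have := Real.rpow_le_one ht h (by linarith : 0 ≤ p)
      have h0 : 0 ≤ (m.factorial : ℝ) * Real.exp t := by positivity
      rw [hD, add_mul]; linarith
    · have := Real.rpow_le_rpow_of_exponent_le h hm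
      rw [Real.rpow_natCast] at this
      rw [hD, add_mul]; linarith
  refine ⟨D * (4 * Real.exp 1), by positivity, ?_⟩
  intro ι _ _ z
  set A := ∑ j, ‖z j‖ ^ 2 with hA
  have hA0 : 0 ≤ A := Finset.sum_nonneg fun _ _ => by positivity
  rcases hA0.eq_or_lt with h0 | hpos
  · have hz : ∀ j, z j = 0 := by
      intro j
      have := (Finset.sum_eq_zero_iff_of_nonneg (fun j _ => by positivity)).mp (hA.symm.trans h0.symm) j
        (Finset.mem_univ _)
      simpa using this
    simp only [hz, mul_zero, Finset.sum_const_zero, norm_zero]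
    rw [Real.zero_rpow (by linarith)]
    simp only [Finset.sum_const_zero]
    positivity
  · set σ := Real.sqrt A with hσ
    have hσpos : 0 < σ := Real.sqrt_pos.mpr hpos
    have hσ2 : σ ^ 2 = A := Real.sq_sqrt hA0
    have h1 := avg_exp_norm (fun j => ((σ⁻¹ : ℝ) : ℂ) * z j)
    have h2 : ∑ j, ‖((σ⁻¹ : ℝ) : ℂ) * z j‖ ^ 2 = 1 := by
      simp only [norm_mul, mul_pow, ← Finset.mul_sum, ← hA, Complex.norm_real, norm_inv,
        Real.norm_eq_abs, abs_of_pos hσpos]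
      rw [← hσ2]; field_simp
    rw [h2] at h1
    have h3 : ∀ ε : ι → ℤˣ, ‖∑ j, sgC (ε j) * z j‖ ^ p ≤
        σ ^ p * (D * Real.exp ‖∑ j, sgC (ε j) * (((σ⁻¹ : ℝ) : ℂ) * z j)‖) := by
      intro ε
      have e : ∑ j, sgC (ε j) * z j = (σ : ℂ) * ∑ j, sgC (ε j) * (((σ⁻¹ : ℝ) : ℂ) * z j) := by
        rw [Finset.mul_sum]
        refine Finset.sum_congr rfl fun j _ => ?_
        have : (σ : ℂ) ≠ 0 := by exact_mod_cast hσpos.ne'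
        push_cast
        field_simp
      rw [e, norm_mul, Complex.norm_real, Real.norm_eq_abs, abs_of_pos hσpos,
        Real.mul_rpow hσpos.le (norm_nonneg _)]
      gcongr
      exact hpow _ (norm_nonneg _)
    have h4 : σ ^ p = A ^ (p / 2) := by
      rw [hσ, Real.sqrt_eq_rpow, ← Real.rpow_mul hA0]; ring_nf
    calc _ ≤ _ := Finset.sum_le_sum fun ε _ => h3 ε
      _ = A ^ (p / 2) * (D * ∑ ε : ι → ℤˣ, Real.exp ‖∑ j, sgC (ε j) * (((σ⁻¹ : ℝ) : ℂ) * z j)‖) := by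
        rw [Finset.mul_sum, Finset.mul_sum, h4]
      _ ≤ A ^ (p / 2) * (D * ((Fintype.card (ι → ℤˣ) : ℝ) * (4 * Real.exp 1))) := by
        gcongr
      _ = _ := by ring

lemma lp_norm_rpow {α : Type*} [MeasurableSpace α] {μ : Measure α} (p : ℝ) (hp : 2 < p)
    (F : Lp ℂ (ENNReal.ofReal p) μ) : ‖F‖ ^ p = ∫ x, ‖F x‖ ^ p ∂μ := by
  have h := MemLp.eLpNorm_eq_integral_rpow_norm
    (by simp; linarith) ENNReal.ofReal_ne_top (Lp.memLp F)
  have h0 : 0 ≤ ∫ x, ‖F x‖ ^ p ∂μ := integral_nonneg fun x => by positivity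
  rw [ENNReal.toReal_ofReal (by linarith)] at h
  rw [Lp.norm_def, h, ENNReal.toReal_ofReal (by positivity), Real.rpow_inv_rpow h0 (by linarith)]

lemma lp_integrable {α : Type*} [MeasurableSpace α] {μ : Measure α} (p : ℝ) (hp : 2 < p)
    (F : Lp ℂ (ENNReal.ofReal p) μ) : Integrable (fun x => ‖F x‖ ^ p) μ := by
  have := (Lp.memLp F).integrable_norm_rpow (by simp; linarith) ENNReal.ofReal_ne_top
  rwa [ENNReal.toReal_ofReal (by linarith)] at this

lemma lp_memLp_two {α : Type*} [MeasurableSpace α] {μ : Measure α} [IsProbabilityMeasure μ]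
    (p : ℝ) (hp : 2 < p) (F : Lp ℂ (ENNReal.ofReal p) μ) : MemLp F 2 μ :=
  (Lp.memLp F).mono_exponent (by
    rw [show (2 : ENNReal) = ENNReal.ofReal 2 by simp]; exact ENNReal.ofReal_le_ofReal hp.le)

lemma lp_integrable_sq {α : Type*} [MeasurableSpace α] {μ : Measure α} [IsProbabilityMeasure μ]
    (p : ℝ) (hp : 2 < p) (F : Lp ℂ (ENNReal.ofReal p) μ) :
    Integrable (fun x => ‖F x‖ ^ 2) μ :=
  (lp_memLp_two p hp F).integrable_norm_pow (by norm_num)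

lemma lp_integral_sq_le {α : Type*} [MeasurableSpace α] {μ : Measure α} [IsProbabilityMeasure μ]
    (p : ℝ) (hp : 2 < p) (F : Lp ℂ (ENNReal.ofReal p) μ) :
    ∫ x, ‖F x‖ ^ 2 ∂μ ≤ ‖F‖ ^ 2 := by
  have h := MemLp.eLpNorm_eq_integral_rpow_norm (by norm_num) (by norm_num) (lp_memLp_two p hp F)
  have h0 : 0 ≤ ∫ x, ‖F x‖ ^ 2 ∂μ := integral_nonneg fun x => by positivity
  have h1 : eLpNorm F 2 μ ≤ eLpNorm F (ENNReal.ofReal p) μ :=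
    eLpNorm_le_eLpNorm_of_exponent_le (by
      rw [show (2 : ENNReal) = ENNReal.ofReal 2 by simp]; exact ENNReal.ofReal_le_ofReal hp.le)
      (Lp.memLp F).1
  have h2 : (eLpNorm F 2 μ).toReal ≤ ‖F‖ := by
    rw [Lp.norm_def]
    exact ENNReal.toReal_mono (Lp.eLpNorm_ne_top F) h1
  simp only [ENNReal.toReal_ofNat, Real.rpow_two] at h
  rw [h, ENNReal.toReal_ofReal (by positivity)] at h2
  calc _ = ((∫ x, ‖F x‖ ^ 2 ∂μ) ^ (2:ℝ)⁻¹) ^ 2 := by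
        rw [← Real.rpow_two, Real.rpow_inv_rpow h0 (by norm_num)]
    _ ≤ _ := by gcongr

lemma lp_sum_coe {α : Type*} [MeasurableSpace α] {μ : Measure α} {P : ENNReal}
    {ι : Type*} [Fintype ι] (c : ι → ℂ) (F : ι → Lp ℂ P μ) :
    ∀ᵐ x ∂μ, (∑ k, c k • F k : Lp ℂ P μ) x = ∑ k, c k * F k x := by
  have h1 := Lp.coeFn_fun_finsetSum Finset.univ (fun k => c k • F k)
  have h2 : ∀ᵐ x ∂μ, ∀ k, (c k • F k : Lp ℂ P μ) x = c k * F k x := by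
    rw [ae_all_iff]
    intro k
    filter_upwards [Lp.coeFn_smul (c k) (F k)] with x hx
    simpa using hx
  filter_upwards [h1, h2] with x hx1 hx2
  rw [hx1]
  exact Finset.sum_congr rfl fun k _ => hx2 k

/-- Type 2 for `L^p`, normalized. -/
lemma type_two (p : ℝ) (hp : 2 < p) [Fact (1 ≤ ENNReal.ofReal p)] : ∃ C : ℝ, 0 < C ∧
    ∀ {α : Type} [MeasurableSpace α] {μ : Measure α}
      {ι : Type} [Fintype ι] [DecidableEq ι] (a : ι → ℂ) (F : ι → Lp ℂ (ENNReal.ofReal p) μ),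
    (∀ k, ‖F k‖ ≤ 1) → ∑ k, ‖a k‖ ^ 2 = 1 →
    ∑ ε : ι → ℤˣ, ‖∑ k, (sgC (ε k) * a k) • F k‖ ≤ (Fintype.card (ι → ℤˣ) : ℝ) * C := by
  obtain ⟨C, hC, hK⟩ := khintchine p hp
  refine ⟨1 + C, by positivity, ?_⟩
  intro α _ μ ι _ _ a F hF ha
  have hrp : ∑ ε : ι → ℤˣ, ‖∑ k, (sgC (ε k) * a k) • F k‖ ^ p ≤
      (Fintype.card (ι → ℤˣ) : ℝ) * C := by
    simp_rw [lp_norm_rpow p hp]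
    rw [← integral_finsetSum _ fun ε _ => lp_integrable p hp _]
    have hsum : ∀ᵐ x ∂μ, ∀ ε : ι → ℤˣ, (∑ k, (sgC (ε k) * a k) • F k : Lp ℂ _ μ) x =
        ∑ k, sgC (ε k) * (a k * F k x) := by
      rw [ae_all_iff]
      intro ε
      filter_upwards [lp_sum_coe (fun k => sgC (ε k) * a k) F] with x hx
      rw [hx]
      simp only [mul_assoc]
    have hpt : ∀ᵐ x ∂μ, ∑ ε : ι → ℤˣ, ‖(∑ k, (sgC (ε k) * a k) • F k : Lp ℂ _ μ) x‖ ^ p ≤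
        (Fintype.card (ι → ℤˣ) : ℝ) * (C * ∑ k, ‖a k‖ ^ 2 * ‖F k x‖ ^ p) := by
      filter_upwards [hsum] with x hx
      simp_rw [hx]
      refine (hK (fun k => a k * F k x)).trans ?_
      gcongr
      have := Real.rpow_arith_mean_le_arith_mean_rpow Finset.univ (fun k => ‖a k‖ ^ 2)
        (fun k => ‖F k x‖ ^ 2) (fun _ _ => by positivity) ha (fun _ _ => by positivity)
        (p := p / 2) (by linarith)
      simp only [norm_mul, mul_pow]
      refine this.trans (le_of_eq ?_)
      refine Finset.sum_congr rfl fun k _ => ?_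
      rw [← Real.rpow_natCast ‖F k x‖ 2, ← Real.rpow_mul (norm_nonneg _)]
      congr 2
      push_cast
      ring
    have hi : ∀ k, Integrable (fun x => ‖a k‖ ^ 2 * ‖F k x‖ ^ p) μ :=
      fun k => (lp_integrable p hp (F k)).const_mul _
    refine (integral_mono_ae (integrable_finsetSum _ fun ε _ => lp_integrable p hp _)
      (((integrable_finsetSum _ fun k _ => hi k).const_mul C).const_mul _) hpt).trans ?_
    rw [integral_const_mul, integral_const_mul, integral_finsetSum _ fun k _ => hi k]
    simp_rw [integral_const_mul, ← lp_norm_rpow p hp]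
    gcongr
    rw [mul_le_iff_le_one_right hC]
    rw [← ha]
    gcongr with k
    exact mul_le_of_le_one_right (by positivity)
      (Real.rpow_le_one (norm_nonneg _) (hF k) (by linarith))
  calc ∑ ε : ι → ℤˣ, ‖∑ k, (sgC (ε k) * a k) • F k‖
      ≤ ∑ ε : ι → ℤˣ, (1 + ‖∑ k, (sgC (ε k) * a k) • F k‖ ^ p) := by
        gcongr with ε
        rcases le_total ‖∑ k, (sgC (ε k) * a k) • F k‖ 1 with h | h
        · have : 0 ≤ ‖∑ k, (sgC (ε k) * a k) • F k‖ ^ p := by positivity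
          linarith
        · have := Real.self_le_rpow_of_one_le h (by linarith : 1 ≤ p)
          linarith
    _ ≤ _ := by
        rw [Finset.sum_add_distrib, mul_add]
        gcongr
        simp

/-- Synthesis bound. -/
lemma synth (p : ℝ) (hp : 2 < p) [Fact (1 ≤ ENNReal.ofReal p)]
    {α : Type} [MeasurableSpace α] {μ : Measure α} (K c : ℝ) (hK : 0 < K) (hc : 0 < c) :
    ∃ D : ℝ, 0 < D ∧ ∀ {ι : Type} [Fintype ι] [DecidableEq ι]
      (g : ι → Lp ℂ (ENNReal.ofReal p) μ) (gs : ι → Lp ℂ (ENNReal.ofReal p) μ →L[ℂ] ℂ),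
      (∀ (ε : ι → ℤˣ) f, ‖∑ j, (sgC (ε j) * gs j f) • g j‖ ≤ K * ‖f‖) →
      (∀ j, c ≤ ‖gs j‖) → ∀ b : ι → ℂ,
      ‖∑ j, b j • g j‖ ^ 2 ≤ D ^ 2 * ∑ j, ‖b j‖ ^ 2 := by
  obtain ⟨C, hC, hT⟩ := type_two p hp
  refine ⟨K * C * (2 / c), by positivity, ?_⟩
  intro ι _ _ g gs H hgs b
  have hex : ∀ j, ∃ f : Lp ℂ (ENNReal.ofReal p) μ, ‖f‖ ≤ 1 ∧ c / 2 ≤ ‖gs j f‖ := by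
    intro j
    by_contra hcon
    push Not at hcon
    have : ‖gs j‖ ≤ c / 2 := by
      refine ContinuousLinearMap.opNorm_le_of_unit_norm (by positivity) ?_
      intro f hf
      exact (hcon f hf.le).le
    linarith [hgs j]
  choose f hf1 hf2 using hex
  have hne : ∀ j, gs j (f j) ≠ 0 := fun j h => by
    have := hf2 j
    rw [h, norm_zero] at this
    linarith
  -- core estimate
  have core : ∀ a : ι → ℂ, ∑ k, ‖a k‖ ^ 2 = 1 →
      ‖∑ j, (a j * gs j (f j)) • g j‖ ≤ K * C := by
    intro a ha
    have h1 := avg_diag (fun j k => (a k * gs j (f k)) • g j)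
    have h2 : ∀ ε : ι → ℤˣ, ∑ j, ∑ k, (sgC (ε j) * sgC (ε k)) • (a k * gs j (f k)) • g j
        = ∑ j, (sgC (ε j) * gs j (∑ k, (sgC (ε k) * a k) • f k)) • g j := by
      intro ε
      refine Finset.sum_congr rfl fun j _ => ?_
      rw [map_sum, Finset.mul_sum, Finset.sum_smul]
      refine Finset.sum_congr rfl fun k _ => ?_
      rw [map_smul, smul_smul, smul_eq_mul]
      congr 1; ring
    simp_rw [h2] at h1
    have hN : (0:ℝ) < (Fintype.card (ι → ℤˣ) : ℝ) := by
      exact_mod_cast Fintype.card_pos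
    have h3 : (Fintype.card (ι → ℤˣ) : ℝ) * ‖∑ j, (a j * gs j (f j)) • g j‖
        ≤ (Fintype.card (ι → ℤˣ) : ℝ) * (K * C) := by
      calc _ = ‖(Fintype.card (ι → ℤˣ) : ℂ) • ∑ j, (a j * gs j (f j)) • g j‖ := by
            rw [norm_smul, Complex.norm_natCast]
        _ = ‖∑ ε : ι → ℤˣ, ∑ j, (sgC (ε j) * gs j (∑ k, (sgC (ε k) * a k) • f k)) • g j‖ := by
            rw [h1]
        _ ≤ ∑ ε : ι → ℤˣ, K * ‖∑ k, (sgC (ε k) * a k) • f k‖ :=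
            (norm_sum_le _ _).trans (Finset.sum_le_sum fun ε _ => H ε _)
        _ ≤ K * ((Fintype.card (ι → ℤˣ) : ℝ) * C) := by
            rw [← Finset.mul_sum]
            gcongr
            exact hT a f hf1 ha
        _ = _ := by ring
    exact le_of_mul_le_mul_left h3 hN
  -- scale
  set a : ι → ℂ := fun j => b j / gs j (f j) with ha
  set A := ∑ j, ‖a j‖ ^ 2 with hA
  have hA0 : 0 ≤ A := Finset.sum_nonneg fun _ _ => by positivity
  have hAB : A ≤ (2 / c) ^ 2 * ∑ j, ‖b j‖ ^ 2 := by
    rw [hA, Finset.mul_sum]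
    gcongr with j
    rw [← mul_pow]
    gcongr
    rw [ha]
    simp only [norm_div]
    rw [div_le_iff₀ (norm_pos_iff.mpr (hne j))]
    calc ‖b j‖ = 2 / c * ‖b j‖ * (c / 2) := by field_simp
      _ ≤ _ := by gcongr; exact hf2 j
  have hb : ∀ j, b j = a j * gs j (f j) := fun j => by
    simp only [ha]; rw [div_mul_cancel₀ _ (hne j)]
  have main : ‖∑ j, b j • g j‖ ^ 2 ≤ (K * C) ^ 2 * A := by
    rcases hA0.eq_or_lt with h0 | hpos
    · have hz : ∀ j, a j = 0 := by
        intro j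
        have := (Finset.sum_eq_zero_iff_of_nonneg (fun j _ => by positivity)).mp
          (hA.symm.trans h0.symm) j (Finset.mem_univ _)
        simpa using this
      simp [hb, hz, ← h0]
    · set σ := Real.sqrt A with hσ
      have hσpos : 0 < σ := Real.sqrt_pos.mpr hpos
      have hσ2 : σ ^ 2 = A := Real.sq_sqrt hA0
      have hσC : (σ : ℂ) ≠ 0 := by exact_mod_cast hσpos.ne'
      have h2 : ∑ j, ‖((σ⁻¹ : ℝ) : ℂ) * a j‖ ^ 2 = 1 := by
        simp only [norm_mul, mul_pow, ← Finset.mul_sum, ← hA, Complex.norm_real, norm_inv,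
          Real.norm_eq_abs, abs_of_pos hσpos]
        rw [← hσ2]; field_simp
      have h3 := core _ h2
      have h4 : ∑ j, b j • g j =
          (σ : ℂ) • ∑ j, (((σ⁻¹ : ℝ) : ℂ) * a j * gs j (f j)) • g j := by
        rw [Finset.smul_sum]
        refine Finset.sum_congr rfl fun j _ => ?_
        rw [smul_smul, hb j]
        congr 1
        push_cast
        field_simp
      rw [h4, norm_smul, Complex.norm_real, Real.norm_eq_abs, abs_of_pos hσpos, mul_pow, hσ2,
        mul_comm]
      gcongr
  refine main.trans ?_
  calc (K * C) ^ 2 * A ≤ (K * C) ^ 2 * ((2 / c) ^ 2 * ∑ j, ‖b j‖ ^ 2) := by gcongr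
    _ = _ := by ring

/-- Analysis bound. -/
lemma analysis_bound (p : ℝ) (hp : 2 < p) [Fact (1 ≤ ENNReal.ofReal p)]
    {α : Type} [MeasurableSpace α] {μ : Measure α} [IsProbabilityMeasure μ]
    (K M : ℝ) (hM : 0 < M) {ι : Type} [Fintype ι] [DecidableEq ι]
    (g : ι → Lp ℂ (ENNReal.ofReal p) μ) (gs : ι → Lp ℂ (ENNReal.ofReal p) μ →L[ℂ] ℂ)
    (H : ∀ (ε : ι → ℤˣ) f, ‖∑ j, (sgC (ε j) * gs j f) • g j‖ ≤ K * ‖f‖)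
    (hnorm : ∀ j, ‖g j‖ = 1) (hbdd : ∀ j, ∀ᵐ t ∂μ, ‖g j t‖ ≤ M)
    (f : Lp ℂ (ENNReal.ofReal p) μ) :
    ∑ j, ‖gs j f‖ ^ 2 ≤ M ^ (p - 2) * (K * ‖f‖) ^ 2 := by
  have hN : (0:ℝ) < (Fintype.card (ι → ℤˣ) : ℝ) := by
    exact_mod_cast Fintype.card_pos
  have hg : ∀ j, 1 ≤ M ^ (p - 2) * ∫ x, ‖g j x‖ ^ 2 ∂μ := by
    intro j
    have h1 := lp_norm_rpow p hp (g j)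
    rw [hnorm, Real.one_rpow] at h1
    rw [h1, ← integral_const_mul]
    refine integral_mono_ae (lp_integrable p hp _) ((lp_integrable_sq p hp _).const_mul _) ?_
    filter_upwards [hbdd j] with x hx
    have : ‖g j x‖ ^ p = ‖g j x‖ ^ (p - 2) * ‖g j x‖ ^ 2 := by
      rw [← Real.rpow_natCast ‖g j x‖ 2, ← Real.rpow_add_of_nonneg (norm_nonneg _)
        (by linarith) (by norm_num)]
      congr 1; push_cast; ring
    simp only [this]
    gcongr
  have hpt : ∀ᵐ x ∂μ, ∑ ε : ι → ℤˣ, ‖(∑ j, (sgC (ε j) * gs j f) • g j : Lp ℂ _ μ) x‖ ^ 2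
      = (Fintype.card (ι → ℤˣ) : ℝ) * ∑ j, ‖gs j f‖ ^ 2 * ‖g j x‖ ^ 2 := by
    have hsum : ∀ᵐ x ∂μ, ∀ ε : ι → ℤˣ, (∑ j, (sgC (ε j) * gs j f) • g j : Lp ℂ _ μ) x =
        ∑ j, sgC (ε j) * (gs j f * g j x) := by
      rw [ae_all_iff]
      intro ε
      filter_upwards [lp_sum_coe (fun j => sgC (ε j) * gs j f) g] with x hx
      rw [hx]
      simp only [mul_assoc]
    filter_upwards [hsum] with x hx
    simp_rw [hx]
    rw [avg_sq]
    simp only [norm_mul, mul_pow]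
  have hintegral := integral_congr_ae hpt
  have hi : ∀ j, Integrable (fun x => ‖gs j f‖ ^ 2 * ‖g j x‖ ^ 2) μ :=
    fun k => (lp_integrable_sq p hp _).const_mul _
  rw [integral_finsetSum _ fun ε _ => lp_integrable_sq p hp _, integral_const_mul,
    integral_finsetSum _ fun k _ => hi k] at hintegral
  simp_rw [integral_const_mul] at hintegral
  have h5 : (Fintype.card (ι → ℤˣ) : ℝ) * ∑ j, ‖gs j f‖ ^ 2 * ∫ x, ‖g j x‖ ^ 2 ∂μ
      ≤ (Fintype.card (ι → ℤˣ) : ℝ) * (K * ‖f‖) ^ 2 := by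
    rw [← hintegral]
    calc _ ≤ ∑ ε : ι → ℤˣ, (K * ‖f‖) ^ 2 := by
          refine Finset.sum_le_sum fun ε _ => (lp_integral_sq_le p hp _).trans ?_
          gcongr
          exact H ε f
      _ = _ := by simp
  have h6 := le_of_mul_le_mul_left h5 hN
  calc ∑ j, ‖gs j f‖ ^ 2 ≤ ∑ j, M ^ (p - 2) * (‖gs j f‖ ^ 2 * ∫ x, ‖g j x‖ ^ 2 ∂μ) := by
        refine Finset.sum_le_sum fun j _ => ?_
        have := mul_le_mul_of_nonneg_left (hg j) (sq_nonneg ‖gs j f‖)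
        linarith
    _ ≤ _ := by
        rw [← Finset.mul_sum]
        gcongr

/-- Unconditionality: uniform bound on signed partial sums. -/
lemma uncond_bound {E : Type*} [NormedAddCommGroup E] [NormedSpace ℂ E] [CompleteSpace E]
    (g : ℕ → E) (gs : ℕ → E →L[ℂ] ℂ) (hframe : ∀ f, HasSum (fun j => gs j f • g j) f) :
    ∃ K : ℝ, 0 < K ∧ ∀ (N : ℕ) (ε : Fin N → ℤˣ) (f : E),
      ‖∑ j : Fin N, (sgC (ε j) * gs j f) • g j‖ ≤ K * ‖f‖ := by
  let U : Finset ℕ → E →L[ℂ] E := fun J => ∑ j ∈ J, (gs j).smulRight (g j)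
  have hU : ∀ J f, U J f = ∑ j ∈ J, gs j f • g j := by
    intro J f
    simp [U]
  obtain ⟨K, hK⟩ := banach_steinhaus (g := U) (by
    intro f
    obtain ⟨s, hs⟩ := summable_iff_vanishing_norm.mp (hframe f).summable 1 one_pos
    refine ⟨1 + ∑ j ∈ s, ‖gs j f • g j‖, fun J => ?_⟩
    rw [hU, ← Finset.sum_inter_add_sum_sdiff J s, add_comm]
    refine (norm_add_le _ _).trans (add_le_add (hs _ Finset.sdiff_disjoint).le ?_)
    refine (norm_sum_le _ _).trans ?_
    exact Finset.sum_le_sum_of_subset_of_nonneg Finset.inter_subset_right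
      fun _ _ _ => norm_nonneg _)
  have hK0 : 0 ≤ K := (norm_nonneg _).trans (hK ∅)
  refine ⟨2 * K + 1, by positivity, ?_⟩
  intro N ε f
  have hJ : ∀ S : Finset (Fin N), ‖∑ j ∈ S, gs j f • g j‖ ≤ K * ‖f‖ := by
    intro S
    have := (U (S.map Fin.valEmbedding)).le_of_opNorm_le (hK _) f
    rw [hU, Finset.sum_map] at this
    simpa using this
  have hsplit : ∑ j : Fin N, (sgC (ε j) * gs j f) • g j
      = ∑ j with ε j = 1, gs j f • g j - ∑ j with ¬ ε j = 1, gs j f • g j := by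
    rw [← Finset.sum_filter_add_sum_filter_not Finset.univ (fun j => ε j = 1), sub_eq_add_neg,
      ← Finset.sum_neg_distrib]
    congr 1
    · refine Finset.sum_congr rfl fun j hj => ?_
      rw [(Finset.mem_filter.mp hj).2]
      simp [sgC]
    · refine Finset.sum_congr rfl fun j hj => ?_
      have := (Int.units_eq_one_or (ε j)).resolve_left (Finset.mem_filter.mp hj).2
      rw [this]
      simp [sgC]
  rw [hsplit]
  refine (norm_sub_le _ _).trans ?_
  have := norm_nonneg f
  linarith [hJ (Finset.univ.filter fun j => ε j = 1), hJ (Finset.univ.filter fun j => ¬ ε j = 1)]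

/-- Disjoint normalized blocks. -/
lemma blocks (p : ℝ) (hp : 2 < p) [Fact (1 ≤ ENNReal.ofReal p)] (n : ℕ) (hn : 0 < n) :
    ∃ F : Fin n → Lp ℂ (ENNReal.ofReal p) (volume.restrict (Set.Icc (0:ℝ) 1)),
      (∀ i, ‖F i‖ = (1 / (n:ℝ)) ^ (1 / p)) ∧
      ∀ ε : Fin n → ℤˣ, ‖∑ i, sgC (ε i) • F i‖ ≤ 1 := by
  have hn' : (0:ℝ) < n := by exact_mod_cast hn
  let I : Fin n → Set ℝ := fun i => Set.Ioc ((i:ℝ) / n) (((i:ℝ) + 1) / n)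
  have hI : ∀ i, MeasurableSet (I i) := fun i => measurableSet_Ioc
  have hsub : ∀ i, I i ⊆ Set.Icc (0:ℝ) 1 := by
    intro i x hx
    have h2 : ((i:ℕ):ℝ) + 1 ≤ n := by exact_mod_cast i.2
    refine ⟨le_trans (by positivity) hx.1.le, hx.2.trans ?_⟩
    rw [div_le_one hn']; exact h2
  have hvol : ∀ i, (volume.restrict (Set.Icc (0:ℝ) 1)) (I i) = ENNReal.ofReal (1 / n) := by
    intro i
    rw [Measure.restrict_apply (hI i), Set.inter_eq_left.mpr (hsub i), Real.volume_Ioc]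
    congr 1
    ring
  have hfin : ∀ i, (volume.restrict (Set.Icc (0:ℝ) 1)) (I i) ≠ ⊤ := fun i => by
    rw [hvol]; exact ENNReal.ofReal_ne_top
  have hdisj : ∀ i j x, x ∈ I i → x ∈ I j → i = j := by
    intro i j x hi hj
    have h1 : ((i:ℕ):ℝ) < (j:ℕ) + 1 := by
      have := hi.1.trans_le hj.2
      rwa [div_lt_div_iff_of_pos_right hn'] at this
    have h2 : ((j:ℕ):ℝ) < (i:ℕ) + 1 := by
      have := hj.1.trans_le hi.2
      rwa [div_lt_div_iff_of_pos_right hn'] at this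
    have h1' : (i:ℕ) < (j:ℕ) + 1 := by exact_mod_cast h1
    have h2' : (j:ℕ) < (i:ℕ) + 1 := by exact_mod_cast h2
    exact Fin.ext (by omega)
  refine ⟨fun i => indicatorConstLp _ (hI i) (hfin i) 1, ?_, ?_⟩
  · intro i
    rw [norm_indicatorConstLp (by simp; linarith) ENNReal.ofReal_ne_top, Measure.real, hvol,
      ENNReal.toReal_ofReal (by positivity), ENNReal.toReal_ofReal (by linarith)]
    simp
  · intro ε
    have hae : ∀ᵐ x ∂(volume.restrict (Set.Icc (0:ℝ) 1)), ∀ i,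
        (indicatorConstLp (ENNReal.ofReal p) (hI i) (hfin i) (1:ℂ)) x
          = (I i).indicator (fun _ => (1:ℂ)) x := by
      rw [ae_all_iff]
      exact fun i => indicatorConstLp_coeFn
    have hb := Lp.norm_le_of_ae_bound (μ := volume.restrict (Set.Icc (0:ℝ) 1))
      (f := ∑ i, sgC (ε i) • indicatorConstLp (ENNReal.ofReal p) (hI i) (hfin i) (1:ℂ))
      (C := 1) zero_le_one (by
        filter_upwards [hae, lp_sum_coe (fun i => sgC (ε i))
          (fun i => indicatorConstLp (ENNReal.ofReal p) (hI i) (hfin i) (1:ℂ))] with x h1 h2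
        rw [h2]
        simp_rw [h1]
        by_cases hx : ∃ i, x ∈ I i
        · obtain ⟨i, hi⟩ := hx
          rw [Finset.sum_eq_single i]
          · simp [hi, sgC_norm]
          · intro j _ hj
            have : x ∉ I j := fun h => hj (hdisj j i x h hi)
            simp [this]
          · simp
        · push Not at hx
          simp [hx])
    refine hb.trans (le_of_eq ?_)
    simp [measureUnivNNReal]

lemma no_lower_bound (p : ℝ) (hp : 2 < p) [Fact (1 ≤ ENNReal.ofReal p)]
    (g : ℕ → Lp ℂ (ENNReal.ofReal p) (volume.restrict (Set.Icc (0:ℝ) 1)))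
    (gs : ℕ → Lp ℂ (ENNReal.ofReal p) (volume.restrict (Set.Icc (0:ℝ) 1)) →L[ℂ] ℂ)
    (hframe : ∀ f, HasSum (fun j => gs j f • g j) f)
    (hnorm : ∀ j, ‖g j‖ = 1)
    (M : ℝ) (hbdd : ∀ j, ∀ᵐ t ∂(volume.restrict (Set.Icc (0:ℝ) 1)), ‖g j t‖ ≤ M) :
    ¬ ∃ c : ℝ, 0 < c ∧ ∀ j, c ≤ ‖gs j‖ := by
  rintro ⟨c, hc, hgs⟩
  have : IsProbabilityMeasure (volume.restrict (Set.Icc (0:ℝ) 1)) := ⟨by simp⟩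
  obtain ⟨K, hK, hU⟩ := uncond_bound g gs hframe
  obtain ⟨D, hD, hS⟩ := synth p hp (μ := volume.restrict (Set.Icc (0:ℝ) 1)) K c hK hc
  set M' := max M 1 with hM'
  have hM'pos : 0 < M' := lt_of_lt_of_le one_pos (le_max_right _ _)
  have hbdd' : ∀ j, ∀ᵐ t ∂(volume.restrict (Set.Icc (0:ℝ) 1)), ‖g j t‖ ≤ M' := fun j => by
    filter_upwards [hbdd j] with t ht using ht.trans (le_max_left _ _)
  have key : ∀ n : ℕ, 0 < n → (n:ℝ) ^ (1 - 2 / p) ≤ 4 * D ^ 2 * (M' ^ (p - 2) * K ^ 2) := by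
    intro n hn
    have hn' : (0:ℝ) < n := by exact_mod_cast hn
    obtain ⟨F, hF1, hF2⟩ := blocks p hp n hn
    set r : ℝ := (1 / (n:ℝ)) ^ (1 / p) with hr
    have hrpos : 0 < r := by positivity
    -- choose a common partial sum
    obtain ⟨N, hN⟩ : ∃ N : ℕ, ∀ i, r / 2 ≤ ‖∑ j : Fin N, gs j (F i) • g j‖ := by
      have : ∀ i, ∀ᶠ N : ℕ in Filter.atTop, r / 2 ≤ ‖∑ j : Fin N, gs j (F i) • g j‖ := by
        intro i
        have ht := (hframe (F i)).tendsto_sum_nat.norm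
        rw [hF1 i] at ht
        filter_upwards [ht.eventually (lt_mem_nhds (half_lt_self hrpos))] with N hN
        rw [Fin.sum_univ_eq_sum_range (fun j => gs j (F i) • g j) N]
        exact hN.le
      exact (Filter.eventually_all.mpr this).exists
    have hlow : ∀ i, (r / 2) ^ 2 ≤ D ^ 2 * ∑ j : Fin N, ‖gs j (F i)‖ ^ 2 := by
      intro i
      refine le_trans ?_ (hS (fun j : Fin N => g j) (fun j : Fin N => gs j) (hU N)
        (fun j => hgs j) (fun j => gs j (F i)))
      have := hN i
      gcongr
    have hup : ∀ ε : Fin n → ℤˣ, ∑ j : Fin N, ‖∑ i, sgC (ε i) * gs j (F i)‖ ^ 2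
        ≤ M' ^ (p - 2) * K ^ 2 := by
      intro ε
      have h1 := analysis_bound p hp K M' hM'pos (fun j : Fin N => g j) (fun j : Fin N => gs j)
        (hU N) (fun j => hnorm j) (fun j => hbdd' j) (∑ i, sgC (ε i) • F i)
      simp only [map_sum, map_smul, smul_eq_mul] at h1
      refine h1.trans ?_
      gcongr
      exact mul_le_of_le_one_right hK.le (hF2 ε)
    have hcard : (0:ℝ) < (Fintype.card (Fin n → ℤˣ) : ℝ) := by
      exact_mod_cast Fintype.card_pos
    have hsum : (Fintype.card (Fin n → ℤˣ) : ℝ) * ∑ j : Fin N, ∑ i, ‖gs j (F i)‖ ^ 2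
        ≤ (Fintype.card (Fin n → ℤˣ) : ℝ) * (M' ^ (p - 2) * K ^ 2) := by
      rw [Finset.mul_sum]
      simp_rw [← avg_sq]
      rw [Finset.sum_comm]
      refine (Finset.sum_le_sum fun ε _ => hup ε).trans ?_
      simp
    have h7 := le_of_mul_le_mul_left hsum hcard
    have h8 : (n:ℝ) * (r / 2) ^ 2 ≤ D ^ 2 * (M' ^ (p - 2) * K ^ 2) := by
      calc (n:ℝ) * (r / 2) ^ 2 = ∑ _i : Fin n, (r / 2) ^ 2 := by simp
        _ ≤ ∑ i, D ^ 2 * ∑ j : Fin N, ‖gs j (F i)‖ ^ 2 := Finset.sum_le_sum fun i _ => hlow i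
        _ = D ^ 2 * ∑ j : Fin N, ∑ i, ‖gs j (F i)‖ ^ 2 := by
          rw [← Finset.mul_sum, Finset.sum_comm]
        _ ≤ _ := by gcongr
    have h9 : (n:ℝ) ^ (1 - 2 / p) = n * r ^ 2 := by
      rw [hr, one_div, Real.inv_rpow hn'.le, ← Real.rpow_neg hn'.le, ← Real.rpow_natCast,
        ← Real.rpow_mul hn'.le, sub_eq_add_neg, Real.rpow_add hn', Real.rpow_one]
      congr 2
      push_cast
      ring
    rw [h9]
    nlinarith [h8]
  have hexp : 0 < 1 - 2 / p := by
    have : 2 / p < 1 := by rw [div_lt_one (by linarith)]; exact hp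
    linarith
  have ht := (tendsto_rpow_atTop hexp).comp (tendsto_natCast_atTop_atTop (R := ℝ))
  obtain ⟨n, hn1, hn2⟩ := ((ht.eventually_gt_atTop (4 * D ^ 2 * (M' ^ (p - 2) * K ^ 2))).and
    (Filter.eventually_gt_atTop 0)).exists
  exact absurd (key n hn2) (not_le.mpr hn1)

/-- Let `p > 2` and `{(g_j, g_j*)}` be an unconditional Schauder frame
for `L^p[0,1]` with `‖g_j‖_p = 1` and `|g_j(x)| ≤ M` a.e. Then `inf_j ‖g_j*‖ = 0`;
in particular `{g_j*}` is not seminormalized. -/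
theorem stmt11 (p : ℝ) (hp : 2 < p) [Fact (1 ≤ ENNReal.ofReal p)]
    (g : ℕ → Lp ℂ (ENNReal.ofReal p) (volume.restrict (Set.Icc (0:ℝ) 1)))
    (gs : ℕ → Lp ℂ (ENNReal.ofReal p) (volume.restrict (Set.Icc (0:ℝ) 1)) →L[ℂ] ℂ)
    (hframe : ∀ f, HasSum (fun j => gs j f • g j) f)
    (hnorm : ∀ j, ‖g j‖ = 1)
    (M : ℝ) (hbdd : ∀ j, ∀ᵐ t ∂(volume.restrict (Set.Icc (0:ℝ) 1)), ‖g j t‖ ≤ M) :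
    (⨅ j, ‖gs j‖) = 0 ∧ ¬ ∃ c : ℝ, 0 < c ∧ ∀ j, c ≤ ‖gs j‖ := by
  have h := no_lower_bound p hp g gs hframe hnorm M hbdd
  refine ⟨?_, h⟩
  by_contra hne
  have h0 : 0 ≤ ⨅ j, ‖gs j‖ := Real.iInf_nonneg fun j => norm_nonneg _
  exact h ⟨_, lt_of_le_of_ne h0 (Ne.symm hne),
    fun j => ciInf_le ⟨0, by rintro _ ⟨j, rfl⟩; exact norm_nonneg _⟩ j⟩
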